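/- There is a class C of distributions on ℕ×ℕ (namely C_g for a suitable superlinear g) that is obliviously additively 3-robustly learnable, yet for every α ≥ 1, C is not adaptively additively α-robustly learnable. -/

import Mathlib

open scoped ENNReal NNReal

/-- Total variation distance between two discrete distributions. -/
noncomputable def tv {X : Type*} (p q : PMF X) : ℝ :=
  (∑' x, |(p x).toReal - (q x).toReal|) / 2

/-- The distribution of an i.i.d. sample of size `m` from `p`, viewed as a multiset. -/
noncomputable def iid {X : Type*} (p : PMF X) : ℕ → PMF (Multiset X)
  | 0 => PMF.pure 0
  | n + 1 => (iid p n).bind fun s => p.map fun x => x ::ₘ s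

/-- `|Q|^m` : first draw `q ∼ Q`, then an i.i.d. sample `S ∼ q^m`. -/
noncomputable def metaSample {X : Type*} (Q : PMF (PMF X)) (m : ℕ) : PMF (Multiset X) :=
  Q.bind fun q => iid q m

/-- An adaptive adversary: a randomized map from samples (finite multisets) to samples. -/
abbrev Adversary (X : Type*) := Multiset X → PMF (Multiset X)

/-- `V(P)`: the distribution of `V S` for `S ∼ P` (including internal randomness). -/
noncomputable def advPush {X : Type*} (V : Adversary X) (P : PMF (Multiset X)) :
    PMF (Multiset X) := P.bind V

/-- An additive adversary only adds points: `S ⊆ V(S)` almost surely. -/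
def IsAdditive {X : Type*} (V : Adversary X) : Prop :=
  ∀ S T, T ∈ (V S).support → S ≤ T

/-- A subtractive adversary only removes points: `V(S) ⊆ S` almost surely. -/
def IsSubtractive {X : Type*} (V : Adversary X) : Prop :=
  ∀ S T, T ∈ (V S).support → T ≤ S

/-- Fixed constant budget `η`: `|V(S)|` depends only on `|S|` (via `c`), and for every `m`,
`η m − 1 < m·budget(V,m) ≤ η m` where `m·budget(V,m) = ||V(S)| − |S||`. -/
def FixedBudget {X : Type*} (V : Adversary X) (η : ℝ) : Prop :=
  ∃ c : ℕ → ℕ, (∀ S T, T ∈ (V S).support → Multiset.card T = c (Multiset.card S)) ∧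
    ∀ m : ℕ, η * m - 1 < |(c m : ℝ) - m| ∧ |(c m : ℝ) - m| ≤ η * m

/-- Fixed constant budget `η` for an additive adversary (`m·budget(V,m) = |V(S)| − |S|`). -/
def FixedBudgetAdd {X : Type*} (V : Adversary X) (η : ℝ) : Prop :=
  ∃ c : ℕ → ℕ, (∀ S T, T ∈ (V S).support → Multiset.card T = c (Multiset.card S)) ∧
    ∀ m : ℕ, η * m - 1 < (c m : ℝ) - m ∧ (c m : ℝ) - m ≤ η * m

/-- Fixed constant budget `η` for a subtractive adversary (`m·budget(V,m) = |S| − |V(S)|`). -/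
def FixedBudgetSub {X : Type*} (V : Adversary X) (η : ℝ) : Prop :=
  ∃ c : ℕ → ℕ, (∀ S T, T ∈ (V S).support → Multiset.card T = c (Multiset.card S)) ∧
    ∀ m : ℕ, η * m - 1 < (m : ℝ) - c m ∧ (m : ℝ) - c m ≤ η * m

/-- Probability of an event under a discrete distribution. -/
noncomputable def probEvent {β : Type*} (P : PMF β) (E : Set β) : ℝ≥0∞ :=
  P.toOuterMeasure E

/-- `A` with sample complexity `mc` learns the class `C` against adversary `V`,
up to error `bound + ε` with confidence `1 − δ` once `m ≥ mc ε δ`. -/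
def RobustLearnerFor {X : Type*} (C : Set (PMF X)) (A : Multiset X → PMF X)
    (mc : ℝ → ℝ → ℕ) (V : Adversary X) (bound : ℝ) : Prop :=
  ∀ p ∈ C, ∀ ε δ : ℝ, 0 < ε → ε < 1 → 0 < δ → δ < 1 →
    ∀ m : ℕ, mc ε δ ≤ m →
      1 - ENNReal.ofReal δ ≤
        probEvent ((iid p m).bind V) {T | tv (A T) p ≤ bound + ε}

/-- `C` is adaptively α-robustly learnable w.r.t. the single adversary `V` with budget `η`. -/
def RobustlyLearnableWrt {X : Type*} (C : Set (PMF X)) (α : ℝ)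
    (V : Adversary X) (η : ℝ) : Prop :=
  ∃ A mc, RobustLearnerFor C A mc V (α * η)

/-- `V` (with budget `η`) is a universal α-adversary for `C`. -/
def UniversalAdversary {X : Type*} (C : Set (PMF X)) (α : ℝ)
    (V : Adversary X) (η : ℝ) : Prop :=
  ¬ RobustlyLearnableWrt C α V η

/-- `C` is adaptively α-robustly learnable w.r.t. a class `𝒱` of adversaries
(each given with its budget). -/
def RobustlyLearnableWrtClass {X : Type*} (C : Set (PMF X)) (α : ℝ)
    (𝒱 : Set (Adversary X × ℝ)) : Prop :=
  ∃ A mc, ∀ Vη ∈ 𝒱, RobustLearnerFor C A mc Vη.1 (α * Vη.2)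

/-- `C` is adaptively additively α-robustly learnable: one learner works simultaneously
against all additive adaptive adversaries with fixed constant budgets. -/
def AdditivelyRobustlyLearnable {X : Type*} (C : Set (PMF X)) (α : ℝ) : Prop :=
  ∃ A mc, ∀ V : Adversary X, ∀ η : ℝ, 0 < η → η < 1 →
    IsAdditive V → FixedBudgetAdd V η → RobustLearnerFor C A mc V (α * η)

/-- `C` is adaptively subtractively α-robustly learnable. -/
def SubtractivelyRobustlyLearnable {X : Type*} (C : Set (PMF X)) (α : ℝ) : Prop :=
  ∃ A mc, ∀ V : Adversary X, ∀ η : ℝ, 0 < η → η < 1 →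
    IsSubtractive V → FixedBudgetSub V η → RobustLearnerFor C A mc V (α * η)

/-- The pair `(V1, V2)` successfully `(γ,ζ)`-confuses `C`-generated samples of size `m`. -/
def ConfusesPair {X : Type*} (C : Set (PMF X)) (V1 V2 : Adversary X)
    (γ ζ : ℝ) (m : ℕ) : Prop :=
  ∃ p ∈ C, ∃ Q : PMF (PMF X), Q.support ⊆ C ∧
    (∀ q ∈ Q.support, γ < tv p q) ∧
    tv (advPush V1 (metaSample Q m)) (advPush V2 (iid p m)) < ζ

/-- A single adversary `V` successfully `(γ,ζ)`-confuses `C`-generated samples of size `m`. -/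
def Confuses {X : Type*} (C : Set (PMF X)) (V : Adversary X) (γ ζ : ℝ) (m : ℕ) : Prop :=
  ConfusesPair C V V γ ζ m

/-- `p` is the distribution `p_{i,j,k} = (1 − 1/j)·δ_{(0,0)} + (1/j − 1/k)·U_{B_i×{2j+1}}
 + (1/k)·δ_{(i,2j+2)}` on `ℕ × ℕ`. -/
def IsPijk (B : ℕ → Finset ℕ) (i j k : ℕ) (p : PMF (ℕ × ℕ)) : Prop :=
  ∀ x : ℕ × ℕ,
    p x = (1 - ((j : ℝ≥0∞))⁻¹) * (if x = (0, 0) then 1 else 0)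
      + (((j : ℝ≥0∞))⁻¹ - ((k : ℝ≥0∞))⁻¹) *
          (if x.1 ∈ B i ∧ x.2 = 2 * j + 1 then (((B i).card : ℝ≥0∞))⁻¹ else 0)
      + ((k : ℝ≥0∞))⁻¹ * (if x = (i, 2 * j + 2) then 1 else 0)

/-- The class `C_g = {p_{i,j,g(j)} : i, j ∈ ℕ}` (for the meaningful parameters). -/
def Cg (B : ℕ → Finset ℕ) (g : ℕ → ℕ) : Set (PMF (ℕ × ℕ)) :=
  {p | ∃ i j : ℕ, 1 ≤ j ∧ j < g j ∧ (B i).Nonempty ∧ IsPijk B i j (g j) p}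

/-- `g` is superlinear: `g(n)/n → ∞`. -/
def Superlinear (g : ℕ → ℕ) : Prop :=
  Filter.Tendsto (fun n => (g n : ℝ) / n) Filter.atTop Filter.atTop

/-- `C` is obliviously additively α-robustly learnable: a learner succeeds given i.i.d.
samples from any additive (Huber) contamination `p' = (1−η)p + ηr` of any `p ∈ C`. -/
def ObliviouslyAdditivelyRobustlyLearnable {X : Type*} (C : Set (PMF X)) (α : ℝ) : Prop :=
  ∃ (A : Multiset X → PMF X) (mc : ℝ → ℝ → ℕ),
    ∀ p ∈ C, ∀ η : ℝ, 0 ≤ η → η < 1 → ∀ r p' : PMF X,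
      (∀ x, p' x = ENNReal.ofReal (1 - η) * p x + ENNReal.ofReal η * r x) →
      ∀ ε δ : ℝ, 0 < ε → ε < 1 → 0 < δ → δ < 1 → ∀ m : ℕ, mc ε δ ≤ m →
        1 - ENNReal.ofReal δ ≤ probEvent (iid p' m) {S | tv (A S) p ≤ α * η + ε}

/-- Expectation of a nonnegative function under a discrete distribution. -/
noncomputable def ex {β : Type*} (P : PMF β) (F : β → ℝ≥0∞) : ℝ≥0∞ := ∑' s, P s * F s

lemma ex_bind {β γ : Type*} (P : PMF β) (Q : β → PMF γ) (F : γ → ℝ≥0∞) :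
    ex (P.bind Q) F = ex P (fun a => ex (Q a) F) := by
  unfold ex
  simp only [PMF.bind_apply, ← ENNReal.tsum_mul_right, ← ENNReal.tsum_mul_left]
  rw [ENNReal.tsum_comm]
  simp only [mul_assoc]

lemma ex_pure {β : Type*} (a : β) (F : β → ℝ≥0∞) : ex (PMF.pure a) F = F a := by
  unfold ex
  rw [tsum_eq_single a]
  · simp
  · intro b hb; simp [hb]

lemma ex_map {β γ : Type*} (P : PMF β) (f : β → γ) (F : γ → ℝ≥0∞) :
    ex (P.map f) F = ex P (fun a => F (f a)) := by
  rw [← PMF.bind_pure_comp, ex_bind]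
  simp [ex_pure]

lemma ex_const {β : Type*} (P : PMF β) (c : ℝ≥0∞) : ex P (fun _ => c) = c := by
  unfold ex
  rw [ENNReal.tsum_mul_right, P.tsum_coe, one_mul]

lemma ex_mono {β : Type*} (P : PMF β) {F G : β → ℝ≥0∞} (h : ∀ s ∈ P.support, F s ≤ G s) :
    ex P F ≤ ex P G := by
  unfold ex
  refine ENNReal.tsum_le_tsum fun s => ?_
  by_cases hs : P s = 0
  · simp [hs]
  · exact mul_le_mul_right (h s hs) _

lemma ex_add {β : Type*} (P : PMF β) (F G : β → ℝ≥0∞) :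
    ex P (fun s => F s + G s) = ex P F + ex P G := by
  unfold ex
  simp only [mul_add]
  exact ENNReal.tsum_add

lemma ex_mul_left {β : Type*} (P : PMF β) (c : ℝ≥0∞) (F : β → ℝ≥0∞) :
    ex P (fun s => c * F s) = c * ex P F := by
  unfold ex
  rw [← ENNReal.tsum_mul_left]
  exact tsum_congr fun s => by ring

lemma ex_comm {β γ : Type*} (P : PMF β) (Q : PMF γ) (F : β → γ → ℝ≥0∞) :
    ex P (fun a => ex Q (F a)) = ex Q (fun b => ex P (fun a => F a b)) := by
  unfold ex
  simp only [← ENNReal.tsum_mul_left]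
  rw [ENNReal.tsum_comm]
  exact tsum_congr fun s => tsum_congr fun t => by ring

open Classical in
lemma probEvent_eq {β : Type*} (P : PMF β) (E : Set β) :
    probEvent P E = ex P (fun s => if s ∈ E then 1 else 0) := by
  unfold probEvent ex
  rw [PMF.toOuterMeasure_apply]
  refine tsum_congr fun s => ?_
  by_cases h : s ∈ E <;> simp [h]

lemma ex_iid_zero {X : Type*} (p : PMF X) (F : Multiset X → ℝ≥0∞) :
    ex (iid p 0) F = F 0 := by
  simp [iid, ex_pure]

lemma ex_iid_succ {X : Type*} (p : PMF X) (m : ℕ) (F : Multiset X → ℝ≥0∞) :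
    ex (iid p (m + 1)) F = ex (iid p m) (fun s => ex p (fun x => F (x ::ₘ s))) := by
  simp [iid, ex_bind, ex_map]

lemma iid_card {X : Type*} (p : PMF X) (m : ℕ) :
    ∀ S ∈ (iid p m).support, Multiset.card S = m := by
  induction m with
  | zero => intro S hS; simp [iid] at hS; simp [hS]
  | succ m ih =>
    intro S hS
    simp only [iid, PMF.mem_support_bind_iff, PMF.mem_support_map_iff] at hS
    obtain ⟨s, hs, x, hx, rfl⟩ := hS
    simp [ih s hs]

lemma iid_map {X Y : Type*} (p : PMF Y) (φ : Y → X) (m : ℕ) :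
    iid (p.map φ) m = (iid p m).map (Multiset.map φ) := by
  induction m with
  | zero => simp [iid, PMF.pure_map]
  | succ m ih =>
    simp only [iid, ih, PMF.bind_map, PMF.map_bind, PMF.map_comp]
    congr 1
    funext s
    simp [Function.comp_def]

lemma ex_iid_prod {X : Type*} (p : PMF X) (f : X → ℝ≥0∞) (m : ℕ) :
    ex (iid p m) (fun S => (S.map f).prod) = (ex p f) ^ m := by
  induction m with
  | zero => simp [ex_iid_zero]
  | succ m ih =>
    rw [ex_iid_succ]
    simp only [Multiset.map_cons, Multiset.prod_cons]
    have : ∀ s : Multiset X, ex p (fun x => f x * (s.map f).prod) = ex p f * (s.map f).prod := by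
      intro s
      simp only [mul_comm _ (s.map f).prod]
      rw [ex_mul_left]
    simp only [this]
    rw [ex_mul_left, ih, pow_succ, mul_comm]

lemma ex_iid_sum {X : Type*} (p : PMF X) (f : X → ℝ≥0∞) (m : ℕ) :
    ex (iid p m) (fun S => (S.map f).sum) = m * ex p f := by
  induction m with
  | zero => simp [ex_iid_zero]
  | succ m ih =>
    rw [ex_iid_succ]
    simp only [Multiset.map_cons, Multiset.sum_cons, ex_add, ex_const]
    rw [ih]
    push_cast
    ring

lemma ex_iid_mecke {X : Type*} [DecidableEq X] (p : PMF X) (m : ℕ) :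
    ∀ (G : X → Multiset X → ℝ≥0∞),
    ex (iid p (m + 1)) (fun S => (S.map fun x => G x (S.erase x)).sum)
      = (m + 1) * ex p (fun x => ex (iid p m) (G x)) := by
  induction m with
  | zero => intro G; simp [ex_iid_succ, ex_iid_zero]
  | succ m ih =>
    intro G
    rw [ex_iid_succ]
    have h1 : ∀ (y : X) (S : Multiset X),
        ((y ::ₘ S).map fun x => G x ((y ::ₘ S).erase x)).sum
          = G y S + (S.map fun x => G x (y ::ₘ S.erase x)).sum := by
      intro y S
      rw [Multiset.map_cons, Multiset.sum_cons, Multiset.erase_cons_head]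
      congr 2
      refine Multiset.map_congr rfl fun x hx => ?_
      by_cases hxy : x = y
      · subst hxy
        rw [Multiset.erase_cons_head, Multiset.cons_erase hx]
      · rw [Multiset.erase_cons_tail _ (fun h => hxy h.symm)]
    have h2 : ∀ S : Multiset X,
        ex p (fun y => (S.map fun x => G x (y ::ₘ S.erase x)).sum)
          = (S.map fun x => ex p (fun y => G x (y ::ₘ S.erase x))).sum := by
      intro S
      generalize hH : (fun x y => G x (y ::ₘ S.erase x)) = H
      have : ∀ T : Multiset X, ex p (fun y => (T.map fun x => H x y).sum)
          = (T.map fun x => ex p (H x)).sum := by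
        intro T
        induction T using Multiset.induction_on with
        | empty => simp [ex_const]
        | cons a T ihT => simp [ex_add, ihT]
      have h3 := this S
      subst hH
      exact h3
    simp only [h1, ex_add, h2]
    rw [ih (fun x S => ex p (fun y => G x (y ::ₘ S))), ex_comm]
    simp only [ex_iid_succ]
    push_cast
    ring

lemma pmf_hasSum {X : Type*} (p : PMF X) : HasSum (fun x => (p x).toReal) 1 := by
  have h := ENNReal.summable_toReal p.tsum_coe_ne_top
  have h2 := ENNReal.tsum_toReal_eq (f := p) (fun x => p.apply_ne_top x)
  rw [p.tsum_coe] at h2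
  have := h.hasSum
  rw [← h2] at this
  simpa using this

/-- Real-valued probability of a set. -/
noncomputable def pr {X : Type*} (p : PMF X) (W : Set X) : ℝ :=
  ∑' x, W.indicator (fun x => (p x).toReal) x

lemma pr_hasSum {X : Type*} (p : PMF X) (W : Set X) :
    HasSum (W.indicator (fun x => (p x).toReal)) (pr p W) :=
  ((pmf_hasSum p).summable.indicator W).hasSum

lemma pr_nonneg {X : Type*} (p : PMF X) (W : Set X) : 0 ≤ pr p W :=
  tsum_nonneg fun x => Set.indicator_nonneg (fun _ _ => ENNReal.toReal_nonneg) x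

lemma pr_le_one {X : Type*} (p : PMF X) (W : Set X) : pr p W ≤ 1 :=
  hasSum_le (fun x => Set.indicator_le_self' (fun _ _ => ENNReal.toReal_nonneg) x)
    (pr_hasSum p W) (pmf_hasSum p)

lemma pr_empty {X : Type*} (p : PMF X) : pr p ∅ = 0 := by simp [pr]

lemma tv_summable {X : Type*} (p q : PMF X) :
    Summable (fun x => |(p x).toReal - (q x).toReal|) :=
  ((pmf_hasSum p).summable.sub (pmf_hasSum q).summable).abs

lemma tv_self {X : Type*} (p : PMF X) : tv p p = 0 := by simp [tv]

lemma tv_comm {X : Type*} (p q : PMF X) : tv p q = tv q p := by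
  simp only [tv, abs_sub_comm]

lemma tv_triangle {X : Type*} (p q r : PMF X) : tv p r ≤ tv p q + tv q r := by
  unfold tv
  rw [← add_div, ← (tv_summable p q).tsum_add (tv_summable q r)]
  gcongr
  · exact tv_summable p r
  · exact (tv_summable p q).add (tv_summable q r)
  · exact abs_sub_le _ _ _

lemma signed_hasSum {X : Type*} (p q : PMF X) (W : Set X) :
    HasSum (fun x => 2 * (W.indicator (fun x => (p x).toReal) x
        - W.indicator (fun x => (q x).toReal) x) - ((p x).toReal - (q x).toReal))
      (2 * (pr p W - pr q W) - (1 - 1)) :=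
  (((pr_hasSum p W).sub (pr_hasSum q W)).mul_left 2).sub ((pmf_hasSum p).sub (pmf_hasSum q))

lemma pr_sub_le_tv {X : Type*} (p q : PMF X) (W : Set X) : pr p W - pr q W ≤ tv p q := by
  have h := hasSum_le (fun x => ?_) (signed_hasSum p q W) (tv_summable p q).hasSum
  · unfold tv; linarith
  · by_cases hx : x ∈ W
    · simp only [hx, Set.indicator_of_mem]
      linarith [le_abs_self ((p x).toReal - (q x).toReal)]
    · simp only [hx, not_false_eq_true, Set.indicator_of_notMem]
      linarith [neg_abs_le ((p x).toReal - (q x).toReal)]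

lemma abs_pr_sub_le_tv {X : Type*} (p q : PMF X) (W : Set X) :
    |pr p W - pr q W| ≤ tv p q := by
  rw [abs_le]
  have h1 := pr_sub_le_tv p q W
  have h2 := pr_sub_le_tv q p W
  rw [tv_comm] at h2
  constructor <;> linarith

lemma tv_eq_pr {X : Type*} (p q : PMF X) (W : Set X)
    (h1 : ∀ x ∈ W, q x ≤ p x) (h2 : ∀ x ∉ W, p x ≤ q x) :
    tv p q = pr p W - pr q W := by
  have h := (signed_hasSum p q W).tsum_eq
  have h' : ∀ x, |(p x).toReal - (q x).toReal| = 2 * (W.indicator (fun x => (p x).toReal) x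
        - W.indicator (fun x => (q x).toReal) x) - ((p x).toReal - (q x).toReal) := by
    intro x
    by_cases hx : x ∈ W
    · have := ENNReal.toReal_mono (p.apply_ne_top x) (h1 x hx)
      simp only [hx, Set.indicator_of_mem]
      rw [abs_of_nonneg (by linarith)]; ring
    · have := ENNReal.toReal_mono (q.apply_ne_top x) (h2 x hx)
      simp only [hx, not_false_eq_true, Set.indicator_of_notMem]
      rw [abs_of_nonpos (by linarith)]; ring
  unfold tv
  simp only [h']
  rw [h]; ring

lemma tv_le_one {X : Type*} (p q : PMF X) : tv p q ≤ 1 := by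
  rw [tv_eq_pr p q {x | q x ≤ p x} (fun x hx => hx) (fun x hx => (not_le.1 hx).le)]
  linarith [pr_le_one p {x | q x ≤ p x}, pr_nonneg q {x | q x ≤ p x}]

lemma pr_mix {X : Type*} (p r p' : PMF X) (η : ℝ) (h0 : 0 ≤ η) (h1 : η < 1)
    (h : ∀ x, p' x = ENNReal.ofReal (1 - η) * p x + ENNReal.ofReal η * r x) (W : Set X) :
    pr p' W = (1 - η) * pr p W + η * pr r W := by
  have h2 := ((pr_hasSum p W).mul_left (1 - η)).add ((pr_hasSum r W).mul_left η)
  rw [← h2.tsum_eq]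
  refine tsum_congr fun x => ?_
  by_cases hx : x ∈ W
  · simp only [hx, Set.indicator_of_mem, h x]
    rw [ENNReal.toReal_add, ENNReal.toReal_mul, ENNReal.toReal_mul, ENNReal.toReal_ofReal h0,
      ENNReal.toReal_ofReal (by linarith)]
    · exact ENNReal.mul_ne_top ENNReal.ofReal_ne_top (p.apply_ne_top x)
    · exact ENNReal.mul_ne_top ENNReal.ofReal_ne_top (r.apply_ne_top x)
  · simp [hx]

lemma abs_pr_mix_sub {X : Type*} (p r p' : PMF X) (η : ℝ) (h0 : 0 ≤ η) (h1 : η < 1)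
    (h : ∀ x, p' x = ENNReal.ofReal (1 - η) * p x + ENNReal.ofReal η * r x) (W : Set X) :
    |pr p W - pr p' W| ≤ η := by
  rw [pr_mix p r p' η h0 h1 h W, abs_le]
  have := pr_nonneg p W
  have := pr_nonneg r W
  have := pr_le_one p W
  have := pr_le_one r W
  constructor <;> nlinarith

lemma ex_ofReal {X : Type*} (p : PMF X) (f : X → ℝ) (hf : ∀ x, 0 ≤ f x) (b : ℝ)
    (h : HasSum (fun x => (p x).toReal * f x) b) :
    ex p (fun x => ENNReal.ofReal (f x)) = ENNReal.ofReal b := by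
  unfold ex
  rw [← h.tsum_eq, ENNReal.ofReal_tsum_of_nonneg
    (fun x => mul_nonneg ENNReal.toReal_nonneg (hf x)) h.summable]
  refine tsum_congr fun x => ?_
  rw [ENNReal.ofReal_mul ENNReal.toReal_nonneg, ENNReal.ofReal_toReal (p.apply_ne_top x)]

/-- One-step moment generating function bound. -/
lemma mgf_step {X : Type*} (p : PMF X) (W : Set X) (l : ℝ) (hl : |l| ≤ 1) :
    ex p (fun x => ENNReal.ofReal (Real.exp (l * (W.indicator 1 x - pr p W))))
      ≤ ENNReal.ofReal (Real.exp (l ^ 2)) := by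
  have hq0 := pr_nonneg p W
  have hq1 := pr_le_one p W
  set q := pr p W with hq
  have hs : HasSum (fun x => (p x).toReal * (1 + l * (W.indicator 1 x - q) + l ^ 2))
      (1 + l * (q - q) + l ^ 2) := by
    have h1 := ((pr_hasSum p W).mul_left l).add ((pmf_hasSum p).mul_left (1 - l * q + l ^ 2))
    have e1 : (fun x => (p x).toReal * (1 + l * (W.indicator 1 x - q) + l ^ 2))
        = fun x => l * W.indicator (fun x => (p x).toReal) x
          + (1 - l * q + l ^ 2) * (p x).toReal := by
      funext x
      by_cases hx : x ∈ W
      · simp [hx]; ring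
      · simp [hx]; ring
    have e2 : 1 + l * (q - q) + l ^ 2 = l * pr p W + (1 - l * q + l ^ 2) * 1 := by
      rw [← hq]; ring
    rw [e1, e2]
    exact h1
  have hb : ∀ x, Real.exp (l * (W.indicator 1 x - q)) ≤ 1 + l * (W.indicator 1 x - q) + l ^ 2 := by
    intro x
    have hu : |(W.indicator 1 x : ℝ) - q| ≤ 1 := by
      by_cases hx : x ∈ W
      · simp only [hx, Set.indicator_of_mem, Pi.one_apply]; rw [abs_le]; constructor <;> linarith
      · simp only [hx, not_false_eq_true, Set.indicator_of_notMem]; rw [abs_le]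
        constructor <;> linarith
    have hu2 : |l * ((W.indicator 1 x : ℝ) - q)| ≤ |l| := by
      rw [abs_mul]; nlinarith [abs_nonneg l]
    have := Real.abs_exp_sub_one_sub_id_le (hu2.trans hl)
    have h3 := (abs_le.1 this).2
    have h4 : (l * ((W.indicator 1 x : ℝ) - q)) ^ 2 ≤ l ^ 2 := sq_le_sq.2 hu2
    linarith
  calc _ ≤ ex p (fun x => ENNReal.ofReal (1 + l * (W.indicator 1 x - q) + l ^ 2)) :=
        ex_mono p fun x _ => ENNReal.ofReal_le_ofReal (hb x)
    _ = ENNReal.ofReal (1 + l * (q - q) + l ^ 2) :=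
        ex_ofReal p _ (fun x => (Real.exp_pos _).le.trans (hb x)) _ hs
    _ ≤ _ := ENNReal.ofReal_le_ofReal (by have := Real.add_one_le_exp (l ^ 2); linarith)

/-- Number of sample points in `W`. -/
noncomputable def cnt {X : Type*} (W : Set X) (S : Multiset X) : ℝ :=
  (S.map (fun y => (W.indicator 1 y : ℝ))).sum

lemma prod_exp {X : Type*} (W : Set X) (l q : ℝ) (S : Multiset X) :
    (S.map (fun y => ENNReal.ofReal (Real.exp (l * (W.indicator 1 y - q))))).prod
      = ENNReal.ofReal (Real.exp (l * (cnt W S - q * Multiset.card S))) := by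
  induction S using Multiset.induction_on with
  | empty => simp [cnt]
  | cons a S ih =>
    rw [Multiset.map_cons, Multiset.prod_cons, ih, ← ENNReal.ofReal_mul (Real.exp_pos _).le,
      ← Real.exp_add]
    simp only [cnt, Multiset.map_cons, Multiset.sum_cons, Multiset.card_cons]
    push_cast
    congr 2; ring

lemma mgf_iid {X : Type*} (p : PMF X) (W : Set X) (l : ℝ) (hl : |l| ≤ 1) (m : ℕ) :
    ex (iid p m) (fun S => ENNReal.ofReal (Real.exp (l * (cnt W S - pr p W * Multiset.card S))))
      ≤ ENNReal.ofReal (Real.exp (m * l ^ 2)) := by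
  simp only [← prod_exp]
  rw [ex_iid_prod, Real.exp_nat_mul, ENNReal.ofReal_pow (Real.exp_pos _).le]
  exact pow_le_pow_left' (mgf_step p W l hl) m

lemma le_sum_of_mem {X : Type*} (S : Multiset X) (f : X → ℝ≥0∞) (x : X) (hx : x ∈ S) :
    f x ≤ (S.map f).sum := by
  obtain ⟨T, rfl⟩ := Multiset.exists_cons_of_mem hx
  simp

open Classical in
lemma uniform_dev {X : Type*} (p : PMF X) (W : X → Set X) (e : ℝ) (he : 0 < e) (he1 : e ≤ 1)
    (m : ℕ) :
    ex (iid p (m + 1)) (fun S => if ∃ x ∈ S, e * (m + 1) < |cnt (W x) S - pr p (W x) * (m + 1)|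
        then 1 else 0)
      ≤ ENNReal.ofReal (2 * (m + 1) * Real.exp (1 - e ^ 2 / 4 * (m + 1))) := by
  set l := e / 2 with hl
  have hl1 : |l| ≤ 1 := by rw [abs_of_pos (by positivity)]; linarith
  have hl2 : |-l| ≤ 1 := by rwa [abs_neg]
  set K : ℝ := Real.exp (-(l * (e * (m + 1) - 1))) with hK
  set G : X → Multiset X → ℝ≥0∞ := fun x T => ENNReal.ofReal K *
    (ENNReal.ofReal (Real.exp (l * (cnt (W x) T - pr p (W x) * Multiset.card T)))
     + ENNReal.ofReal (Real.exp (-l * (cnt (W x) T - pr p (W x) * Multiset.card T)))) with hG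
  have h1 : ∀ S ∈ (iid p (m + 1)).support,
      (if ∃ x ∈ S, e * (m + 1) < |cnt (W x) S - pr p (W x) * (m + 1)| then (1 : ℝ≥0∞) else 0)
        ≤ (S.map fun x => G x (S.erase x)).sum := by
    intro S hS
    split_ifs with h
    · obtain ⟨x, hx, hdev⟩ := h
      refine le_trans ?_ (le_sum_of_mem S _ x hx)
      have hcard := iid_card p _ S hS
      obtain ⟨T, rfl⟩ := Multiset.exists_cons_of_mem hx
      simp only [Multiset.card_cons, Nat.add_right_cancel_iff] at hcard
      simp only [Multiset.erase_cons_head, hG, hcard]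
      rw [← ENNReal.ofReal_add (Real.exp_pos _).le (Real.exp_pos _).le,
        ← ENNReal.ofReal_mul (Real.exp_pos _).le, ENNReal.one_le_ofReal]
      have hc : cnt (W x) (x ::ₘ T) = (W x).indicator 1 x + cnt (W x) T := by simp [cnt]
      have hi0 : (0 : ℝ) ≤ (W x).indicator 1 x := Set.indicator_nonneg (by simp) x
      have hi1 : (W x).indicator 1 x ≤ (1 : ℝ) := Set.indicator_le_self' (by simp) x
      rw [hc] at hdev
      have hq0 := pr_nonneg p (W x)
      have hq1 := pr_le_one p (W x)
      have hlp : 0 < l := by positivity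
      rw [mul_add, ← Real.exp_add, ← Real.exp_add]
      rcases lt_abs.1 hdev with hd | hd
      · refine le_add_of_le_of_nonneg (Real.one_le_exp ?_) (Real.exp_pos _).le
        have : 0 ≤ l * ((cnt (W x) T - pr p (W x) * m) - (e * (m + 1) - 1)) := by
          apply mul_nonneg hlp.le; linarith
        linarith
      · refine le_add_of_nonneg_of_le (Real.exp_pos _).le (Real.one_le_exp ?_)
        have : 0 ≤ l * (-(cnt (W x) T - pr p (W x) * m) - (e * (m + 1) - 1)) := by
          apply mul_nonneg hlp.le; linarith
        linarith
    · exact zero_le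
  refine (ex_mono _ h1).trans ?_
  rw [ex_iid_mecke]
  have h2 : ∀ x, ex (iid p m) (G x) ≤ ENNReal.ofReal (K * (2 * Real.exp (m * l ^ 2))) := by
    intro x
    simp only [hG]
    rw [ex_mul_left, ex_add, ENNReal.ofReal_mul (Real.exp_pos _).le, two_mul,
      ENNReal.ofReal_add (Real.exp_pos _).le (Real.exp_pos _).le]
    gcongr
    · exact mgf_iid p (W x) l hl1 m
    · have := mgf_iid p (W x) (-l) hl2 m
      rwa [neg_sq] at this
  calc _ ≤ ((m : ℝ≥0∞) + 1) * ex p (fun _ => ENNReal.ofReal (K * (2 * Real.exp (m * l ^ 2)))) := by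
        gcongr
        exact ex_mono p fun x _ => h2 x
    _ = ENNReal.ofReal ((m + 1) * (K * (2 * Real.exp (m * l ^ 2)))) := by
        have e3 : ENNReal.ofReal ((m : ℝ) + 1) = (m : ℝ≥0∞) + 1 := by
          rw [ENNReal.ofReal_add (by positivity) (by positivity)]
          simp
        rw [ex_const, ENNReal.ofReal_mul (p := (m : ℝ) + 1) (by positivity), e3]
    _ ≤ _ := by
        apply ENNReal.ofReal_le_ofReal
        have : K * Real.exp (m * l ^ 2) ≤ Real.exp (1 - e ^ 2 / 4 * (m + 1)) := by
          rw [hK, ← Real.exp_add]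
          apply Real.exp_le_exp.2
          rw [hl]
          nlinarith
        have hm : (0 : ℝ) ≤ 2 * (m + 1) := by positivity
        nlinarith

/-- Latent sample space for the lower bound. -/
abbrev Latent (n : ℕ) := Option (Option (Fin n))

/-- The latent map: zero, label, or position. -/
def lmap {n : ℕ} (idx : (Fin n → Bool) → ℕ) (j : ℕ) (f : Fin n → Bool) : Latent n → ℕ × ℕ
  | none => (0, 0)
  | some none => (idx f, 2 * j + 2)
  | some (some a) => (2 * (a : ℕ) + (f a).toNat, 2 * j + 1)

/-- Weights of the latent distribution. -/
noncomputable def lweight (n j k : ℕ) : Latent n → ℝ≥0∞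
  | none => 1 - (j : ℝ≥0∞)⁻¹
  | some none => (k : ℝ≥0∞)⁻¹
  | some (some _) => ((j : ℝ≥0∞)⁻¹ - (k : ℝ≥0∞)⁻¹) * (n : ℝ≥0∞)⁻¹

lemma lweight_sum (n j k : ℕ) (hn : 0 < n) (hj : 1 ≤ j) (hjk : j < k) :
    ∑ y, lweight n j k y = 1 := by
  have hjk' : (k : ℝ≥0∞)⁻¹ ≤ (j : ℝ≥0∞)⁻¹ := by
    apply ENNReal.inv_le_inv.2; exact_mod_cast hjk.le
  have hj' : (j : ℝ≥0∞)⁻¹ ≤ 1 := by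
    apply ENNReal.inv_le_one.2; exact_mod_cast hj
  have hnn : (n : ℝ≥0∞) * (n : ℝ≥0∞)⁻¹ = 1 :=
    ENNReal.mul_inv_cancel (by exact_mod_cast hn.ne') (ENNReal.natCast_ne_top n)
  rw [Fintype.sum_option, Fintype.sum_option]
  simp only [lweight, Finset.sum_const, Finset.card_univ, Fintype.card_fin, nsmul_eq_mul]
  rw [mul_left_comm, hnn, mul_one, add_tsub_cancel_of_le hjk']
  exact tsub_add_cancel_of_le (hj'.trans le_rfl)

/-- The latent distribution. -/
noncomputable def lpmf (n j k : ℕ) (hn : 0 < n) (hj : 1 ≤ j) (hjk : j < k) : PMF (Latent n) :=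
  PMF.ofFintype (lweight n j k) (lweight_sum n j k hn hj hjk)

/-- The set coded by `f`. -/
def fset {n : ℕ} (f : Fin n → Bool) : Finset ℕ :=
  Finset.univ.image (fun a : Fin n => 2 * (a : ℕ) + (f a).toNat)

lemma code_inj {n : ℕ} (f g : Fin n → Bool) (a b : Fin n)
    (h : 2 * (a : ℕ) + (f a).toNat = 2 * (b : ℕ) + (g b).toNat) : a = b ∧ f a = g b := by
  have h1 := Bool.toNat_lt (f a)
  have h2 := Bool.toNat_lt (g b)
  constructor
  · ext; omega
  · have : (f a).toNat = (g b).toNat := by omega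
    revert this
    cases f a <;> cases g b <;> simp

lemma fset_card {n : ℕ} (f : Fin n → Bool) : (fset f).card = n := by
  unfold fset
  rw [Finset.card_image_of_injective _ (fun a b h => (code_inj f f a b h).1)]
  simp

lemma fset_inj {n : ℕ} : Function.Injective (fset (n := n)) := by
  intro f g h
  funext a
  have : 2 * (a : ℕ) + (f a).toNat ∈ fset g := by
    rw [← h]; exact Finset.mem_image_of_mem _ (Finset.mem_univ a)
  unfold fset at this
  simp only [Finset.mem_image, Finset.mem_univ, true_and] at this
  obtain ⟨b, hb⟩ := this
  obtain ⟨h1, h2⟩ := code_inj g f b a hb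
  subst h1
  exact h2.symm

lemma lmap_isPijk (B : ℕ → Finset ℕ) {n : ℕ} (idx : (Fin n → Bool) → ℕ)
    (hidx : ∀ f, B (idx f) = fset f) (j k : ℕ) (hn : 0 < n) (hj : 1 ≤ j) (hjk : j < k)
    (f : Fin n → Bool) : IsPijk B (idx f) j k ((lpmf n j k hn hj hjk).map (lmap idx j f)) := by
  intro x
  rw [PMF.map_apply, tsum_fintype, Fintype.sum_option, Fintype.sum_option]
  have hs : (∑ a : Fin n, if x = lmap idx j f (some (some a)) then
        lpmf n j k hn hj hjk (some (some a)) else 0)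
      = ((j : ℝ≥0∞)⁻¹ - (k : ℝ≥0∞)⁻¹) *
          (if x.1 ∈ B (idx f) ∧ x.2 = 2 * j + 1 then (((B (idx f)).card : ℝ≥0∞))⁻¹ else 0) := by
    rw [hidx f, fset_card]
    split_ifs with h
    · obtain ⟨h1, h2⟩ := h
      unfold fset at h1
      simp only [Finset.mem_image, Finset.mem_univ, true_and] at h1
      obtain ⟨a, ha⟩ := h1
      rw [Finset.sum_eq_single a]
      · have : x = lmap idx j f (some (some a)) := Prod.ext ha.symm h2
        rw [if_pos this]; rfl
      · intro b _ hb
        rw [if_neg]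
        intro hx
        apply hb
        have : x.1 = 2 * (b : ℕ) + (f b).toNat := by rw [hx]; rfl
        exact (code_inj f f b a (by rw [ha, this])).1
      · simp
    · rw [mul_zero]
      refine Finset.sum_eq_zero fun a _ => if_neg ?_
      rintro rfl
      exact h ⟨Finset.mem_image_of_mem _ (Finset.mem_univ a), rfl⟩
  refine Eq.trans (congrArg₂ (· + ·) rfl (congrArg₂ (· + ·) rfl
    (Eq.trans (Finset.sum_congr rfl fun a _ => by congr) hs))) ?_
  simp only [lpmf, PMF.ofFintype_apply, lweight, lmap, mul_ite, mul_one, mul_zero]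
  have h3 : ∀ a b c : ℝ≥0∞, a + (b + c) = a + c + b := by intros; ring
  refine (h3 _ _ _).trans ?_
  congr

open Classical in
/-- Flip `f` outside of the positions seen in the latent sample. -/
noncomputable def flipLat {n : ℕ} (s : Multiset (Latent n)) (f : Fin n → Bool) : Fin n → Bool :=
  fun a => if some (some a) ∈ s then f a else !(f a)

lemma flipLat_invol {n : ℕ} (s : Multiset (Latent n)) (f : Fin n → Bool) :
    flipLat s (flipLat s f) = f := by
  funext a
  unfold flipLat
  split_ifs <;> simp

open Classical in
/-- Flip `f` outside of the positions seen in the actual sample. -/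
noncomputable def flipObs {n : ℕ} (j : ℕ) (S : Multiset (ℕ × ℕ)) (f : Fin n → Bool) :
    Fin n → Bool :=
  fun a => if (2 * (a : ℕ), 2 * j + 1) ∈ S ∨ (2 * (a : ℕ) + 1, 2 * j + 1) ∈ S
    then f a else !(f a)

lemma flipObs_eq {n : ℕ} (idx : (Fin n → Bool) → ℕ) (j : ℕ) (s : Multiset (Latent n))
    (f h : Fin n → Bool) : flipObs j (s.map (lmap idx j f)) h = flipLat s h := by
  funext a
  unfold flipObs flipLat
  have key : ((2 * (a : ℕ), 2 * j + 1) ∈ s.map (lmap idx j f) ∨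
      (2 * (a : ℕ) + 1, 2 * j + 1) ∈ s.map (lmap idx j f)) ↔ some (some a) ∈ s := by
    constructor
    · rintro (h | h)
      all_goals
        rw [Multiset.mem_map] at h
        obtain ⟨y, hy, hy2⟩ := h
        rcases y with _ | _ | b
        · simp [lmap] at hy2
        · simp [lmap] at hy2
        · simp only [lmap, Prod.mk.injEq, and_true] at hy2
          have h1 := Bool.toNat_lt (f b)
          have : b = a := by ext; omega
          rwa [← this]
    · intro hs
      have := Multiset.mem_map_of_mem (lmap idx j f) hs
      simp only [lmap] at this
      cases hf : f a
      · left; simpa [hf] using this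
      · right; simpa [hf] using this
  simp only [key]

/-- Labels of the sample. -/
def labs (j : ℕ) (S : Multiset (ℕ × ℕ)) : Multiset (ℕ × ℕ) := S.filter (fun x => x.2 = 2 * j + 2)

open Classical in
/-- What the adversary adds, given that it may add `L` points. -/
noncomputable def advAdd {n : ℕ} (idx : (Fin n → Bool) → ℕ) (j L : ℕ) (S : Multiset (ℕ × ℕ)) :
    Multiset (ℕ × ℕ) :=
  if Multiset.card (labs j S) ≤ L then
    (labs j S).map (fun x => (idx (flipObs j S (Function.invFun idx x.1)), 2 * j + 2))
      + Multiset.replicate (L - Multiset.card (labs j S)) (0, 0)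
  else Multiset.replicate L (0, 0)

lemma advAdd_card {n : ℕ} (idx : (Fin n → Bool) → ℕ) (j L : ℕ) (S : Multiset (ℕ × ℕ)) :
    Multiset.card (advAdd idx j L S) = L := by
  unfold advAdd
  split_ifs with h
  · simp; omega
  · simp

/-- Latent labels. -/
def latLabs {n : ℕ} (s : Multiset (Latent n)) : Multiset (Latent n) := s.filter (fun y => y = some none)

lemma labs_map {n : ℕ} (idx : (Fin n → Bool) → ℕ) (j : ℕ) (f : Fin n → Bool)
    (s : Multiset (Latent n)) : labs j (s.map (lmap idx j f)) = (latLabs s).map (lmap idx j f) := by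
  unfold labs latLabs
  rw [Multiset.filter_map]
  congr 1
  refine Multiset.filter_congr fun y _ => ?_
  rcases y with _ | _ | b <;> simp [lmap]

/-- The sample shown to the learner is the same for `f` and the flipped `f`. -/
lemma adv_sym {n : ℕ} (idx : (Fin n → Bool) → ℕ) (hinj : Function.Injective idx) (j L : ℕ)
    (f : Fin n → Bool) (s : Multiset (Latent n)) (hs : Multiset.card (latLabs s) ≤ L) :
    s.map (lmap idx j f) + advAdd idx j L (s.map (lmap idx j f))
      = s.map (lmap idx j (flipLat s f))
        + advAdd idx j L (s.map (lmap idx j (flipLat s f))) := by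
  have h0 : ∀ h : Fin n → Bool, advAdd idx j L (s.map (lmap idx j h))
      = (latLabs s).map (lmap idx j (flipLat s h))
        + Multiset.replicate (L - Multiset.card (latLabs s)) (0, 0) := by
    intro h
    unfold advAdd
    rw [labs_map, Multiset.card_map, if_pos hs, Multiset.map_map]
    congr 1
    refine Multiset.map_congr rfl fun y hy => ?_
    have hy2 : y = some none := (Multiset.mem_filter.1 hy).2
    subst hy2
    simp only [Function.comp, lmap]
    rw [Function.leftInverse_invFun hinj, flipObs_eq]
  have h1 : ∀ h : Fin n → Bool, s.map (lmap idx j h)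
      = (latLabs s).map (lmap idx j h)
        + (s.filter (fun y => ¬ y = some none)).map (lmap idx j h) := by
    intro h
    rw [← Multiset.map_add, latLabs, Multiset.filter_add_not]
  have h2 : (s.filter (fun y => ¬ y = some none)).map (lmap idx j f)
      = (s.filter (fun y => ¬ y = some none)).map (lmap idx j (flipLat s f)) := by
    refine Multiset.map_congr rfl fun y hy => ?_
    obtain ⟨hy1, hy2⟩ := Multiset.mem_filter.1 hy
    rcases y with _ | _ | b
    · rfl
    · exact absurd rfl hy2
    · simp [lmap, flipLat, hy1]
  rw [h0, h0, flipLat_invol, h1 f, h1 (flipLat s f), h2]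
  ac_rfl

/-- Lower bound on the distance between the two confused distributions. -/
lemma tv_flip_lower (n j k : ℕ) (hn : 0 < n) (hj : 1 ≤ j) (hjk : j < k)
    (idx : (Fin n → Bool) → ℕ) (f : Fin n → Bool) (s : Multiset (Latent n)) :
    ((n : ℝ) - Multiset.card s) * (((j : ℝ)⁻¹ - (k : ℝ)⁻¹) * (n : ℝ)⁻¹) ≤
      tv ((lpmf n j k hn hj hjk).map (lmap idx j f))
        ((lpmf n j k hn hj hjk).map (lmap idx j (flipLat s f))) := by
  classical
  set P := (lpmf n j k hn hj hjk).map (lmap idx j f) with hP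
  set Q := (lpmf n j k hn hj hjk).map (lmap idx j (flipLat s f)) with hQ
  set U : Finset (Fin n) := Finset.univ.filter (fun a => some (some a) ∉ s) with hU
  set D : Finset (ℕ × ℕ) := U.image (fun a => lmap idx j f (some (some a))) with hD
  have hUc : (n : ℝ) - Multiset.card s ≤ U.card := by
    have h1 : (Finset.univ.filter (fun a : Fin n => some (some a) ∈ s)).card
        ≤ Multiset.card s := by
      have : (Finset.univ.filter (fun a : Fin n => some (some a) ∈ s)).image
          (fun a => (some (some a) : Latent n)) ⊆ s.toFinset := by
        intro y hy
        simp only [Finset.mem_image, Finset.mem_filter, Finset.mem_univ, true_and] at hy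
        obtain ⟨a, ha, rfl⟩ := hy
        exact Multiset.mem_toFinset.2 ha
      have h2 := Finset.card_le_card this
      rw [Finset.card_image_of_injective _
        (fun a b h => Option.some_injective _ (Option.some_injective _ h))] at h2
      exact h2.trans (Multiset.toFinset_card_le s)
    have h2 := Finset.card_filter_add_card_filter_not (s := (Finset.univ : Finset (Fin n)))
      (fun a : Fin n => some (some a) ∈ s)
    rw [Finset.card_univ, Fintype.card_fin] at h2
    have h3 : n ≤ Multiset.card s + U.card := by rw [hU]; omega
    have : (n : ℝ) ≤ Multiset.card s + U.card := by exact_mod_cast h3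
    linarith
  have hj0 : (0 : ℝ) < j := by exact_mod_cast hj
  have hc : 0 ≤ ((j : ℝ)⁻¹ - (k : ℝ)⁻¹) * (n : ℝ)⁻¹ := by
    apply mul_nonneg
    · rw [sub_nonneg]; exact inv_anti₀ hj0 (by exact_mod_cast hjk.le)
    · positivity
  have hPx : ∀ a : Fin n, ((j : ℝ)⁻¹ - (k : ℝ)⁻¹) * (n : ℝ)⁻¹
      ≤ (P (lmap idx j f (some (some a)))).toReal := by
    intro a
    have h1 : lweight n j k (some (some a)) ≤ P (lmap idx j f (some (some a))) := by
      rw [hP, PMF.map_apply]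
      refine le_trans ?_ (ENNReal.le_tsum (some (some a)))
      rw [if_pos rfl]; rfl
    have h2 := ENNReal.toReal_mono (P.apply_ne_top _) h1
    refine le_trans (le_of_eq ?_) h2
    simp only [lweight]
    rw [ENNReal.toReal_mul, ENNReal.toReal_sub_of_le, ENNReal.toReal_inv, ENNReal.toReal_inv,
      ENNReal.toReal_inv]
    · simp
    · apply ENNReal.inv_le_inv.2; exact_mod_cast hjk.le
    · simp; omega
  have hQx : ∀ a ∈ U, Q (lmap idx j f (some (some a))) = 0 := by
    intro a ha
    rw [hQ, PMF.map_apply, ENNReal.tsum_eq_zero]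
    intro y
    rw [if_neg]
    intro h
    rcases y with _ | _ | b
    · simp [lmap] at h
    · simp [lmap] at h
    · simp only [lmap, Prod.mk.injEq, and_true] at h
      obtain ⟨h1, h2⟩ := code_inj _ _ _ _ h
      subst h1
      have : some (some a) ∉ s := (Finset.mem_filter.1 ha).2
      simp [flipLat, this] at h2
  have hinj : Set.InjOn (fun a => lmap idx j f (some (some a))) (U : Set (Fin n)) := by
    intro a _ b _ h
    simp only [lmap, Prod.mk.injEq, and_true] at h
    exact (code_inj f f a b h).1
  have hprD : ∀ R : PMF (ℕ × ℕ), pr R (D : Set (ℕ × ℕ))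
      = ∑ a ∈ U, (R (lmap idx j f (some (some a)))).toReal := by
    intro R
    unfold pr
    rw [tsum_eq_sum (s := D) (fun x hx => Set.indicator_of_notMem (by simpa using hx) _),
      hD, Finset.sum_image hinj]
    refine Finset.sum_congr rfl fun a ha => ?_
    rw [Set.indicator_of_mem]
    exact Finset.mem_coe.2 (Finset.mem_image_of_mem (fun a => lmap idx j f (some (some a))) ha)
  have h1 := pr_sub_le_tv P Q (D : Set (ℕ × ℕ))
  have h2 : pr Q (D : Set (ℕ × ℕ)) = 0 := by
    rw [hprD]
    exact Finset.sum_eq_zero fun a ha => by rw [hQx a ha]; rfl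
  have h3 : (U.card : ℝ) * (((j : ℝ)⁻¹ - (k : ℝ)⁻¹) * (n : ℝ)⁻¹) ≤ pr P (D : Set (ℕ × ℕ)) := by
    rw [hprD, ← nsmul_eq_mul]
    exact Finset.card_nsmul_le_sum _ _ _ fun a _ => hPx a
  have h4 := mul_le_mul_of_nonneg_right hUc hc
  linarith

lemma latLabs_card {n : ℕ} (s : Multiset (Latent n)) :
    ((Multiset.card (latLabs s) : ℕ) : ℝ≥0∞)
      = (s.map (fun y => if y = some none then (1 : ℝ≥0∞) else 0)).sum := by
  unfold latLabs
  induction s using Multiset.induction_on with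
  | empty => simp
  | cons a s ih =>
    rw [Multiset.map_cons, Multiset.sum_cons, ← ih, Multiset.filter_cons]
    by_cases h : a = some none <;> simp [h, add_comm]

lemma lower_bound (B : ℕ → Finset ℕ) (hB : Function.Surjective B) (α : ℝ) (hα : 1 ≤ α) :
    ¬ AdditivelyRobustlyLearnable (Cg B (fun j => j ^ 2 + 5)) α := by
  classical
  rintro ⟨A, mc, hA⟩
  obtain ⟨j, hjα⟩ := exists_nat_ge (1000 * α)
  have hj1000 : (1000 : ℝ) ≤ j := by linarith
  have hj : 1 ≤ j := by
    have : (1 : ℝ) ≤ j := by linarith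
    exact_mod_cast this
  obtain ⟨k, hk⟩ : ∃ k, k = j ^ 2 + 5 := ⟨_, rfl⟩
  have hjk : j < k := by rw [hk]; nlinarith
  have hkR : (k : ℝ) = (j : ℝ) ^ 2 + 5 := by rw [hk]; push_cast; ring
  have hj0 : (0 : ℝ) < j := by linarith
  have hk0 : (0 : ℝ) < k := by rw [hkR]; positivity
  set ε : ℝ := 1 / (16 * j) with hε
  set η : ℝ := 4 / k with hη
  have hη0 : 0 < η := by positivity
  have hη1 : η < 1 := by rw [hη, div_lt_one hk0, hkR]; nlinarith
  have hε0 : 0 < ε := by positivity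
  have hε1 : ε < 1 := by rw [hε, div_lt_one (by positivity)]; linarith
  set m : ℕ := mc ε (1 / 8) + 1 with hm
  have hm0 : 0 < m := by omega
  set n : ℕ := 2 * m with hn'
  have hn : 0 < n := by omega
  choose idx hidx using fun f : Fin n → Bool => hB (fset f)
  have hinj : Function.Injective idx := by
    intro f g h
    apply fset_inj
    rw [← hidx f, ← hidx g, h]
  set μ := lpmf n j k hn hj hjk with hμ
  set V : Adversary (ℕ × ℕ) :=
    fun S => PMF.pure (S + advAdd idx j ⌊η * Multiset.card S⌋₊ S) with hV
  have hVadd : IsAdditive V := by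
    intro S T hT
    simp only [hV, PMF.support_pure, Set.mem_singleton_iff] at hT
    rw [hT]; exact Multiset.le_add_right _ _
  have hVb : FixedBudgetAdd V η := by
    refine ⟨fun m => m + ⌊η * m⌋₊, ?_, ?_⟩
    · intro S T hT
      simp only [hV, PMF.support_pure, Set.mem_singleton_iff] at hT
      rw [hT, Multiset.card_add, advAdd_card]
    · intro m
      have h1 := Nat.lt_floor_add_one (η * m)
      have h2 := Nat.floor_le (a := η * m) (by positivity)
      push_cast
      constructor <;> linarith
  have hL := hA V η hη0 hη1 hVadd hVb
  set L : ℕ := ⌊η * m⌋₊ with hLdef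
  set P : (Fin n → Bool) → PMF (ℕ × ℕ) := fun f => μ.map (lmap idx j f) with hP
  set E : (Fin n → Bool) → Set (Multiset (ℕ × ℕ)) :=
    fun f => {T | tv (A T) (P f) ≤ α * η + ε} with hE
  set obs : (Fin n → Bool) → Multiset (Latent n) → Multiset (ℕ × ℕ) :=
    fun f s => s.map (lmap idx j f) + advAdd idx j L (s.map (lmap idx j f)) with hobs
  set G : (Fin n → Bool) → Multiset (Latent n) → ℝ≥0∞ :=
    fun f s => if Multiset.card (latLabs s) ≤ L ∧ obs f s ∈ E f then 1 else 0 with hG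
  set bad : Multiset (Latent n) → ℝ≥0∞ :=
    fun s => if L < Multiset.card (latLabs s) then 1 else 0 with hbad
  -- each hypothesis is learned
  have hf : ∀ f, 1 - ENNReal.ofReal (1 / 8) ≤ ex (iid μ m) (G f) + ex (iid μ m) bad := by
    intro f
    have hmem : P f ∈ Cg B (fun j => j ^ 2 + 5) := by
      refine ⟨idx f, j, hj, ?_, ?_, ?_⟩
      · show j < j ^ 2 + 5
        rw [← hk]; exact hjk
      · rw [hidx, ← Finset.card_pos, fset_card]; exact hn
      · have := lmap_isPijk B idx hidx j k hn hj hjk f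
        show IsPijk B (idx f) j (j ^ 2 + 5) (P f)
        rw [← hk]
        exact this
    have h1 := hL (P f) hmem ε (1 / 8) hε0 hε1 (by norm_num) (by norm_num) m (by omega)
    refine h1.trans ?_
    rw [probEvent_eq, ex_bind, iid_map, ex_map, ← ex_add]
    refine ex_mono _ fun s hs => ?_
    have hcard := iid_card _ _ s hs
    simp only [hV, ex_pure, Multiset.card_map, hcard]
    simp only [hG, hbad, hobs, hE]
    by_cases hc : Multiset.card (latLabs s) ≤ L
    · rw [if_neg (not_lt.2 hc), add_zero]
      simp only [hc, true_and]
      exact le_rfl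
    · rw [if_pos (not_le.1 hc)]
      refine le_trans ?_ (le_add_left le_rfl)
      split_ifs <;> simp
  -- the bad event
  have hb : (4 * m : ℝ≥0∞) * ex (iid μ m) bad ≤ m := by
    have hkne : (k : ℝ≥0∞) ≠ 0 := by
      have : k ≠ 0 := by omega
      exact_mod_cast this
    rw [← ex_mul_left]
    calc _ ≤ ex (iid μ m) (fun s => (k : ℝ≥0∞) *
          (s.map (fun y => if y = some none then (1 : ℝ≥0∞) else 0)).sum) := by
          refine ex_mono _ fun s _ => ?_
          rw [← latLabs_card]
          simp only [hbad]
          split_ifs with hc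
          · have h1 : η * m < Multiset.card (latLabs s) := (Nat.floor_lt (by positivity)).1 hc
            have h2 : (4 * m : ℝ) < k * Multiset.card (latLabs s) := by
              rw [hη, div_mul_eq_mul_div, div_lt_iff₀ hk0] at h1; linarith
            have h3 : 4 * m ≤ k * Multiset.card (latLabs s) := by exact_mod_cast h2.le
            rw [mul_one]
            exact_mod_cast h3
          · simp
      _ = m := by
          rw [ex_mul_left, ex_iid_sum]
          have : ex μ (fun y => if y = some none then (1 : ℝ≥0∞) else 0) = (k : ℝ≥0∞)⁻¹ := by
            unfold ex
            rw [tsum_eq_single (some none)]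
            · simp [hμ, lpmf, lweight]
            · intro y hy; simp [hy]
          rw [this, mul_left_comm, ENNReal.mul_inv_cancel hkne (ENNReal.natCast_ne_top k), mul_one]
  -- symmetry
  have hsym : ∀ s ∈ (iid μ m).support, 2 * ∑ f, G f s ≤ (Fintype.card (Fin n → Bool) : ℝ≥0∞) := by
    intro s hs
    have hcard := iid_card _ _ s hs
    have hbij : ∑ f, G (flipLat s f) s = ∑ f, G f s :=
      Equiv.sum_comp (Function.Involutive.toPerm (flipLat s) (flipLat_invol s)) (fun f => G f s)
    have hle : ∀ f, G f s + G (flipLat s f) s ≤ 1 := by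
      intro f
      simp only [hG]
      by_cases hc : Multiset.card (latLabs s) ≤ L
      · have ho : obs (flipLat s f) s = obs f s := (adv_sym idx hinj j L f s hc).symm
        simp only [hc, true_and, ho]
        by_cases h1 : obs f s ∈ E f
        · have h2 : obs f s ∉ E (flipLat s f) := by
            intro h2
            simp only [hE, Set.mem_ofPred_eq] at h1 h2
            have h3 := tv_triangle (P f) (A (obs f s)) (P (flipLat s f))
            rw [tv_comm (P f) (A (obs f s))] at h3
            have h4 := tv_flip_lower n j k hn hj hjk idx f s
            rw [hcard] at h4
            have hm0' : (0 : ℝ) < m := by exact_mod_cast hm0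
            have h5 : ((n : ℝ) - m) * (((j : ℝ)⁻¹ - (k : ℝ)⁻¹) * (n : ℝ)⁻¹)
                = ((j : ℝ)⁻¹ - (k : ℝ)⁻¹) / 2 := by
              rw [hn']; push_cast; field_simp; ring
            rw [h5] at h4
            have h6 : α * η ≤ (j : ℝ)⁻¹ / 250 := by
              rw [hη, hkR, inv_eq_one_div, div_div, mul_div_assoc',
                div_le_div_iff₀ (by positivity) (by positivity)]
              nlinarith
            have h7 : (k : ℝ)⁻¹ ≤ (j : ℝ)⁻¹ / 1000 := by
              rw [inv_eq_one_div, inv_eq_one_div, div_div,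
                div_le_div_iff₀ (by positivity) (by positivity), hkR]
              nlinarith
            have h8 : ε = (j : ℝ)⁻¹ / 16 := by rw [hε]; field_simp
            have h9 : (0 : ℝ) < (j : ℝ)⁻¹ := by positivity
            have h10 : tv (P f) (P (flipLat s f)) ≤ 2 * (α * η + ε) := by linarith
            have h11 : ((j : ℝ)⁻¹ - (k : ℝ)⁻¹) / 2 ≤ tv (P f) (P (flipLat s f)) := h4
            linarith
          simp [h1, h2]
        · simp only [h1, if_false, zero_add]; split_ifs <;> simp
      · simp [hc]
    calc 2 * ∑ f, G f s = ∑ f, (G f s + G (flipLat s f) s) := by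
          rw [Finset.sum_add_distrib, hbij, two_mul]
      _ ≤ ∑ _f : Fin n → Bool, 1 := Finset.sum_le_sum fun f _ => hle f
      _ = _ := by simp
  have hsum : 2 * ∑ f, ex (iid μ m) (G f) ≤ (Fintype.card (Fin n → Bool) : ℝ≥0∞) := by
    have h1 : ∑ f, ex (iid μ m) (G f) = ex (iid μ m) (fun s => ∑ f, G f s) := by
      unfold ex
      simp only [Finset.mul_sum]
      exact (Summable.tsum_finsetSum fun f _ => ENNReal.summable).symm
    rw [h1, ← ex_mul_left]
    exact (ex_mono _ hsym).trans (ex_const _ _).le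
  have hall : ∑ _f : Fin n → Bool, (1 - ENNReal.ofReal (1 / 8))
      ≤ ∑ f, ex (iid μ m) (G f) + ∑ _f : Fin n → Bool, ex (iid μ m) bad := by
    rw [← Finset.sum_add_distrib]
    exact Finset.sum_le_sum fun f _ => hf f
  simp only [Finset.sum_const, nsmul_eq_mul, Finset.card_univ] at hall
  have hNpos : 0 < Fintype.card (Fin n → Bool) := Fintype.card_pos
  generalize Fintype.card (Fin n → Bool) = N at hsum hall hNpos
  have hbt : ex (iid μ m) bad ≠ ⊤ := by
    refine ne_top_of_le_ne_top ENNReal.one_ne_top ((ex_mono _ fun s _ => ?_).trans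
      (ex_const (iid μ m) 1).le)
    simp only [hbad]; split_ifs <;> simp
  have hxt : ∑ f, ex (iid μ m) (G f) ≠ ⊤ := by
    intro h
    rw [h] at hsum
    simp at hsum
  generalize ex (iid μ m) bad = b at hb hall hbt
  generalize ∑ f, ex (iid μ m) (G f) = x at hsum hall hxt
  have r1 := ENNReal.toReal_mono (ENNReal.natCast_ne_top m) hb
  have r2 := ENNReal.toReal_mono (ENNReal.natCast_ne_top N) hsum
  have r3 := ENNReal.toReal_mono (by finiteness) hall
  rw [ENNReal.toReal_add hxt (by finiteness), ENNReal.toReal_mul, ENNReal.toReal_mul,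
    ENNReal.toReal_sub_of_le (by rw [ENNReal.ofReal_le_one]; norm_num) (by simp),
    ENNReal.toReal_ofReal (by norm_num)] at r3
  simp only [ENNReal.toReal_mul, ENNReal.toReal_natCast, ENNReal.toReal_ofNat,
    ENNReal.toReal_one] at r1 r2 r3
  have hNR : (0 : ℝ) < N := by exact_mod_cast hNpos
  have hmR : (0 : ℝ) < m := by exact_mod_cast hm0
  have hb4 : b.toReal ≤ 1 / 4 := by
    by_contra hcon
    push Not at hcon
    nlinarith
  nlinarith

section Structure

variable {B : ℕ → Finset ℕ} {i j k : ℕ} {p : PMF (ℕ × ℕ)}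

lemma pijk_zero (h : IsPijk B i j k p) : p (0, 0) = 1 - (j : ℝ≥0∞)⁻¹ := by
  rw [h]; simp

lemma pijk_pos (h : IsPijk B i j k p) (x : ℕ × ℕ) (h1 : x.1 ∈ B i) (h2 : x.2 = 2 * j + 1) :
    p x = ((j : ℝ≥0∞)⁻¹ - (k : ℝ≥0∞)⁻¹) * ((B i).card : ℝ≥0∞)⁻¹ := by
  have h3 : x ≠ (0, 0) := by rintro rfl; simp at h2
  have h4 : x ≠ (i, 2 * j + 2) := by rintro rfl; simp at h2
  rw [h, if_neg h3, if_neg h4, if_pos ⟨h1, h2⟩]; simp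

lemma pijk_lab (h : IsPijk B i j k p) : p (i, 2 * j + 2) = (k : ℝ≥0∞)⁻¹ := by
  rw [h]; simp

lemma pijk_supp (h : IsPijk B i j k p) (x : ℕ × ℕ) (hx : p x ≠ 0) (h0 : x ≠ (0, 0)) :
    (x.1 ∈ B i ∧ x.2 = 2 * j + 1) ∨ x = (i, 2 * j + 2) := by
  by_contra hcon
  push Not at hcon
  apply hx
  rw [h, if_neg h0, if_neg hcon.2, if_neg (fun h => hcon.1 h.1 h.2)]; simp

lemma pijk_col_le (h : IsPijk B i j k p) (x : ℕ × ℕ) (h2 : x.2 = 2 * j + 1) :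
    p x ≤ ((j : ℝ≥0∞)⁻¹ - (k : ℝ≥0∞)⁻¹) * ((B i).card : ℝ≥0∞)⁻¹ := by
  by_cases h1 : x.1 ∈ B i
  · exact (pijk_pos h x h1 h2).le
  · have h3 : x ≠ (0, 0) := by rintro rfl; simp at h2
    have h4 : x ≠ (i, 2 * j + 2) := by rintro rfl; simp at h2
    rw [h, if_neg h3, if_neg h4, if_neg (fun h => h1 h.1)]; simp

lemma pijk_lab_le (h : IsPijk B i j k p) (x : ℕ × ℕ) (h2 : x.2 = 2 * j + 2) :
    p x ≤ (k : ℝ≥0∞)⁻¹ := by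
  by_cases h1 : x = (i, 2 * j + 2)
  · rw [h1]; exact (pijk_lab h).le
  · by_contra hcon
    have h3 : x ≠ (0, 0) := by rintro rfl; simp at h2
    rcases pijk_supp h x (fun h0 => hcon (by rw [h0]; simp)) h3 with h4 | h4
    · omega
    · exact h1 h4

end Structure

/-- The nontrivial part of the support. -/
def Wp (p : PMF (ℕ × ℕ)) : Set (ℕ × ℕ) := {x | p x ≠ 0 ∧ x ≠ (0, 0)}

/-- The point mass at the origin. -/
noncomputable def d0 : PMF (ℕ × ℕ) := PMF.pure (0, 0)

/-- `p` dominates `q` on the nontrivial part of the support of `p`. -/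
def Dom (p q : PMF (ℕ × ℕ)) : Prop :=
  p (0, 0) ≤ q (0, 0) ∧ ∀ x, p x ≠ 0 → x ≠ (0, 0) → q x ≤ p x

lemma Dom.tv_eq {p q : PMF (ℕ × ℕ)} (h : Dom p q) :
    tv p q = pr p (Wp p) - pr q (Wp p) := by
  apply tv_eq_pr
  · intro x hx; exact h.2 x hx.1 hx.2
  · intro x hx
    by_cases h0 : x = (0, 0)
    · rw [h0]; exact h.1
    · have : p x = 0 := by
        by_contra hp
        exact hx ⟨hp, h0⟩
      rw [this]; exact zero_le

lemma Wp_d0 : Wp d0 = ∅ := by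
  ext x
  simp [Wp, d0]

lemma d0_zero : d0 (0, 0) = 1 := by simp [d0]

lemma d0_ne {x : ℕ × ℕ} (h : x ≠ (0, 0)) : d0 x = 0 := by simp [d0, h]

lemma dom_of_le {B : ℕ → Finset ℕ} {i j i' j' k k' : ℕ} {p q : PMF (ℕ × ℕ)}
    (hp : IsPijk B i j k p) (hq : IsPijk B i' j' k' q) (hne : (B i).Nonempty)
    (h : j < j' ∨ (j = j' ∧ k = k' ∧ (B i).card ≤ (B i').card)) : Dom p q := by
  constructor
  · rw [pijk_zero hp, pijk_zero hq]
    apply tsub_le_tsub_left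
    apply ENNReal.inv_le_inv.2
    have : j ≤ j' := by omega
    exact_mod_cast this
  · intro x hx h0
    rcases h with h | ⟨rfl, rfl, h⟩
    · have hcol : x.2 = 2 * j + 1 ∨ x.2 = 2 * j + 2 := by
        rcases pijk_supp hp x hx h0 with h1 | h1
        · exact Or.inl h1.2
        · right; rw [h1]
      have : q x = 0 := by
        by_contra hqx
        rcases pijk_supp hq x hqx h0 with h1 | h1
        · omega
        · have : x.2 = 2 * j' + 2 := by rw [h1]
          omega
      rw [this]; exact zero_le
    · rcases pijk_supp hp x hx h0 with h1 | h1
      · rw [pijk_pos hp x h1.1 h1.2]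
        refine (pijk_col_le hq x h1.2).trans ?_
        gcongr
      · rw [h1, pijk_lab hp]
        exact pijk_lab_le hq _ rfl

lemma dom_total {B : ℕ → Finset ℕ} {g : ℕ → ℕ} {p q : PMF (ℕ × ℕ)}
    (hp : p ∈ Cg B g ∨ p = d0) (hq : q ∈ Cg B g ∨ q = d0) : Dom p q ∨ Dom q p := by
  have hd : ∀ r : PMF (ℕ × ℕ), Dom r d0 := by
    intro r
    refine ⟨?_, ?_⟩
    · rw [d0_zero]; exact r.coe_le_one _
    · intro x _ h0; rw [d0_ne h0]; exact zero_le
  rcases hp with ⟨i, j, hj, hjg, hne, hp⟩ | rfl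
  · rcases hq with ⟨i', j', hj', hjg', hne', hq⟩ | rfl
    · rcases lt_trichotomy j j' with h | h | h
      · exact Or.inl (dom_of_le hp hq hne (Or.inl h))
      · subst h
        rcases le_total (B i).card (B i').card with h | h
        · exact Or.inl (dom_of_le hp hq hne (Or.inr ⟨rfl, rfl, h⟩))
        · exact Or.inr (dom_of_le hq hp hne' (Or.inr ⟨rfl, rfl, h⟩))
      · exact Or.inr (dom_of_le hq hp hne' (Or.inl h))
    · exact Or.inl (hd p)
  · exact Or.inr (hd q)

lemma tv_test {B : ℕ → Finset ℕ} {g : ℕ → ℕ} {p q : PMF (ℕ × ℕ)}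
    (hp : p ∈ Cg B g ∨ p = d0) (hq : q ∈ Cg B g ∨ q = d0) :
    ∃ c, (c = p ∨ c = q) ∧ tv p q ≤ |pr p (Wp c) - pr q (Wp c)| := by
  rcases dom_total hp hq with h | h
  · exact ⟨p, Or.inl rfl, h.tv_eq ▸ le_abs_self _⟩
  · refine ⟨q, Or.inr rfl, ?_⟩
    rw [tv_comm, h.tv_eq, abs_sub_comm]
    exact le_abs_self _

lemma pr_singleton {X : Type*} (p : PMF X) (a : X) : pr p {a} = (p a).toReal := by
  unfold pr
  rw [tsum_eq_single a]
  · simp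
  · intro b hb; simp [hb]

lemma tv_d0 {B : ℕ → Finset ℕ} {i j k : ℕ} {p : PMF (ℕ × ℕ)} (hj : 1 ≤ j)
    (hp : IsPijk B i j k p) : tv d0 p ≤ 1 / j := by
  have hj' : (j : ℝ≥0∞)⁻¹ ≤ 1 := by
    apply ENNReal.inv_le_one.2; exact_mod_cast hj
  rw [tv_eq_pr d0 p {(0, 0)}, pr_singleton, pr_singleton, d0_zero, pijk_zero hp,
    ENNReal.toReal_sub_of_le hj' (by simp)]
  · simp
  · intro x hx
    rw [Set.mem_singleton_iff.1 hx, d0_zero]; exact p.coe_le_one _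
  · intro x hx
    rw [d0_ne hx]; exact zero_le

open Classical in
/-- The member of the class with label `x`, if there is one. -/
noncomputable def cand (B : ℕ → Finset ℕ) (g : ℕ → ℕ) (x : ℕ × ℕ) : PMF (ℕ × ℕ) :=
  if h : ∃ p : PMF (ℕ × ℕ), ∃ i j : ℕ, 1 ≤ j ∧ j < g j ∧ (B i).Nonempty ∧
      IsPijk B i j (g j) p ∧ x = (i, 2 * j + 2) then h.choose else d0

lemma cand_mem (B : ℕ → Finset ℕ) (g : ℕ → ℕ) (x : ℕ × ℕ) :
    cand B g x ∈ Cg B g ∨ cand B g x = d0 := by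
  unfold cand
  split_ifs with h
  · left
    obtain ⟨i, j, h1, h2, h3, h4, _⟩ := h.choose_spec
    exact ⟨i, j, h1, h2, h3, h4⟩
  · right; rfl

lemma cand_eq {B : ℕ → Finset ℕ} {g : ℕ → ℕ} {i j : ℕ} {p : PMF (ℕ × ℕ)} (h1 : 1 ≤ j)
    (h2 : j < g j) (h3 : (B i).Nonempty) (h4 : IsPijk B i j (g j) p) :
    cand B g (i, 2 * j + 2) = p := by
  have h : ∃ p : PMF (ℕ × ℕ), ∃ i' j' : ℕ, 1 ≤ j' ∧ j' < g j' ∧ (B i').Nonempty ∧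
      IsPijk B i' j' (g j') p ∧ (i, 2 * j + 2) = (i', 2 * j' + 2) :=
    ⟨p, i, j, h1, h2, h3, h4, rfl⟩
  unfold cand
  rw [dif_pos h]
  obtain ⟨i', j', _, _, _, h8, h9⟩ := h.choose_spec
  simp only [Prod.mk.injEq] at h9
  obtain ⟨rfl, h9⟩ := h9
  have : j = j' := by omega
  subst this
  ext x
  rw [h8 x, h4 x]

open Classical in
/-- Candidates seen in the sample. -/
noncomputable def cands (B : ℕ → Finset ℕ) (g : ℕ → ℕ) (S : Multiset (ℕ × ℕ)) :
    Finset (PMF (ℕ × ℕ)) := insert d0 (S.toFinset.image (cand B g))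

lemma d0_mem_cands (B : ℕ → Finset ℕ) (g : ℕ → ℕ) (S : Multiset (ℕ × ℕ)) :
    d0 ∈ cands B g S := by
  unfold cands; simp

lemma mem_cands_iff (B : ℕ → Finset ℕ) (g : ℕ → ℕ) (S : Multiset (ℕ × ℕ)) (c : PMF (ℕ × ℕ)) :
    c ∈ cands B g S ↔ c = d0 ∨ ∃ x ∈ S, cand B g x = c := by
  unfold cands; simp

/-- The score of a hypothesis. -/
noncomputable def score (B : ℕ → Finset ℕ) (g : ℕ → ℕ) (S : Multiset (ℕ × ℕ))
    (f : PMF (ℕ × ℕ)) : ℝ :=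
  (cands B g S).sup' ⟨d0, d0_mem_cands B g S⟩
    (fun c => |pr f (Wp c) - cnt (Wp c) S / Multiset.card S|)

lemma exists_learner (B : ℕ → Finset ℕ) (g : ℕ → ℕ) : ∃ A : Multiset (ℕ × ℕ) → PMF (ℕ × ℕ),
    ∀ S, A S ∈ cands B g S ∧ ∀ h ∈ cands B g S, score B g S (A S) ≤ score B g S h := by
  choose A hA using fun S => (cands B g S).exists_min_image (score B g S) ⟨d0, d0_mem_cands B g S⟩
  exact ⟨A, hA⟩

lemma cands_sub {B : ℕ → Finset ℕ} {g : ℕ → ℕ} {S : Multiset (ℕ × ℕ)} {c : PMF (ℕ × ℕ)}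
    (h : c ∈ cands B g S) : c ∈ Cg B g ∨ c = d0 := by
  rcases (mem_cands_iff B g S c).1 h with h | ⟨x, _, rfl⟩
  · exact Or.inr h
  · exact cand_mem B g x

lemma learner_good {B : ℕ → Finset ℕ} {g : ℕ → ℕ} {A : Multiset (ℕ × ℕ) → PMF (ℕ × ℕ)}
    (hA : ∀ S, A S ∈ cands B g S ∧ ∀ h ∈ cands B g S, score B g S (A S) ≤ score B g S h)
    (p r p' : PMF (ℕ × ℕ)) (η : ℝ) (h0 : 0 ≤ η) (h1 : η < 1)
    (hmix : ∀ x, p' x = ENNReal.ofReal (1 - η) * p x + ENNReal.ofReal η * r x)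
    (e : ℝ) (he : 0 < e) (m : ℕ) (S : Multiset (ℕ × ℕ)) (hcard : Multiset.card S = m + 1)
    (hdev : ¬ ∃ x ∈ S, e * (m + 1) < |cnt (Wp (cand B g x)) S - pr p' (Wp (cand B g x)) * (m + 1)|)
    (p0 : PMF (ℕ × ℕ)) (hp0 : p0 ∈ cands B g S) (htv : tv p0 p ≤ e) :
    tv (A S) p ≤ 2 * η + 5 * e := by
  obtain ⟨hAS, hmin⟩ := hA S
  have hm : (0 : ℝ) < m + 1 := by positivity
  have hs : score B g S p0 ≤ η + 2 * e := by
    unfold score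
    refine Finset.sup'_le _ _ fun c hc => ?_
    rcases (mem_cands_iff B g S c).1 hc with rfl | ⟨x, hx, rfl⟩
    · rw [Wp_d0, pr_empty]
      simp only [cnt, Set.indicator_empty, Multiset.map_const', Multiset.sum_replicate, smul_zero,
        zero_div, sub_zero, abs_zero]
      positivity
    · push Not at hdev
      have hd := hdev x hx
      set W := Wp (cand B g x)
      have e1 : |pr p' W - cnt W S / Multiset.card S| ≤ e := by
        rw [hcard]
        push_cast
        have : pr p' W - cnt W S / ((m : ℝ) + 1) = -(cnt W S - pr p' W * (m + 1)) / (m + 1) := by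
          field_simp; ring
        rw [this, abs_div, abs_neg, abs_of_pos hm, div_le_iff₀ hm]
        exact hd
      have e2 := abs_pr_mix_sub p r p' η h0 h1 hmix W
      have e3 := (abs_pr_sub_le_tv p0 p W).trans htv
      rw [abs_le] at *
      constructor <;> linarith [e1.1, e1.2, e2.1, e2.2, e3.1, e3.2]
  have hs2 := (hmin p0 hp0).trans hs
  have key : tv (A S) p0 ≤ 2 * (η + 2 * e) := by
    obtain ⟨c, hc, hcle⟩ := tv_test (cands_sub hAS) (cands_sub hp0)
    have hcm : c ∈ cands B g S := by rcases hc with rfl | rfl <;> assumption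
    have t1 : |pr (A S) (Wp c) - cnt (Wp c) S / Multiset.card S| ≤ score B g S (A S) :=
      Finset.le_sup' (fun c => |pr (A S) (Wp c) - cnt (Wp c) S / Multiset.card S|) hcm
    have t2 : |pr p0 (Wp c) - cnt (Wp c) S / Multiset.card S| ≤ score B g S p0 :=
      Finset.le_sup' (fun c => |pr p0 (Wp c) - cnt (Wp c) S / Multiset.card S|) hcm
    have t3 := abs_sub_le (pr (A S) (Wp c)) (cnt (Wp c) S / Multiset.card S) (pr p0 (Wp c))
    rw [abs_sub_comm (cnt (Wp c) S / Multiset.card S)] at t3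
    linarith
  have := tv_triangle (A S) p0 p
  linarith

open Classical in
lemma miss_prob {X : Type*} (p : PMF X) (t : X) (c : ℝ) (hc0 : 0 ≤ c) (hc1 : c ≤ 1)
    (hc : ENNReal.ofReal c ≤ p t) (m : ℕ) :
    ex (iid p m) (fun S => if t ∉ S then 1 else 0) ≤ ENNReal.ofReal ((1 - c) ^ m) := by
  have h1 : ∀ S : Multiset X, (if t ∉ S then (1 : ℝ≥0∞) else 0)
      = (S.map (fun y => if y = t then (0 : ℝ≥0∞) else 1)).prod := by
    intro S
    induction S using Multiset.induction_on with
    | empty => simp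
    | cons a S ih =>
      rw [Multiset.map_cons, Multiset.prod_cons, ← ih]
      by_cases h : a = t
      · simp [h]
      · have h' : ¬ t = a := fun h2 => h h2.symm
        simp [h, h']
  simp only [h1]
  rw [ex_iid_prod, ENNReal.ofReal_pow (by linarith)]
  refine pow_le_pow_left' ?_ m
  have h2 : ex p (fun y => if y = t then (0 : ℝ≥0∞) else 1)
      + ex p (fun y => if y = t then (1 : ℝ≥0∞) else 0) = 1 := by
    rw [← ex_add]
    refine Eq.trans ?_ (ex_const p 1)
    congr 1
    funext y
    by_cases h : y = t <;> simp [h]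
  have h3 : ex p (fun y => if y = t then (1 : ℝ≥0∞) else 0) = p t := by
    unfold ex
    rw [tsum_eq_single t]
    · simp
    · intro y hy; simp [hy]
  rw [h3] at h2
  rw [ENNReal.ofReal_sub _ hc0, ENNReal.ofReal_one]
  have h4 : ex p (fun y => if y = t then (0 : ℝ≥0∞) else 1) = 1 - p t :=
    ENNReal.eq_sub_of_add_eq (p.apply_ne_top t) h2
  rw [h4]
  exact tsub_le_tsub_left hc 1

lemma exists_mc (e δ : ℝ) (he : 0 < e) (hδ : 0 < δ) : ∃ M : ℕ, ∀ m : ℕ, M ≤ m →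
    1 ≤ m ∧ 2 * m * Real.exp (1 - e ^ 2 / 4 * m) +
      (1 - (2 / 3) / (1 / e ^ 2 + 5)) ^ m ≤ δ := by
  have hr : Real.exp (-(e ^ 2 / 4)) < 1 := by
    rw [Real.exp_lt_one_iff]
    have : 0 < e ^ 2 := by positivity
    linarith
  have t1 := (tendsto_self_mul_const_pow_of_lt_one (Real.exp_pos _).le hr).const_mul
    (2 * Real.exp 1)
  have hD : 0 < 1 / e ^ 2 + 5 := by positivity
  have hc0 : 0 < (2 / 3) / (1 / e ^ 2 + 5) := by positivity
  have hc1 : (2 / 3) / (1 / e ^ 2 + 5) ≤ 1 := by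
    rw [div_le_one hD]
    have : 0 < 1 / e ^ 2 := by positivity
    linarith
  have t2 := tendsto_pow_atTop_nhds_zero_of_lt_one (r := 1 - (2 / 3) / (1 / e ^ 2 + 5))
    (by linarith) (by linarith)
  have t3 := t1.add t2
  rw [mul_zero, add_zero] at t3
  have t4 := (t3.eventually (gt_mem_nhds hδ)).and (Filter.eventually_ge_atTop 1)
  obtain ⟨M, hM⟩ := Filter.eventually_atTop.1 t4
  refine ⟨M, fun m hm => ⟨(hM m hm).2, le_trans (le_of_eq ?_) (hM m hm).1.le⟩⟩
  congr 1
  rw [← Real.exp_nat_mul, show (1 : ℝ) - e ^ 2 / 4 * m = 1 + m * (-(e ^ 2 / 4)) by ring,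
    Real.exp_add]
  ring

lemma upper_bound (B : ℕ → Finset ℕ) :
    ObliviouslyAdditivelyRobustlyLearnable (Cg B (fun j => j ^ 2 + 5)) 3 := by
  classical
  set g : ℕ → ℕ := fun j => j ^ 2 + 5 with hg
  obtain ⟨A, hA⟩ := exists_learner B g
  have hex : ∀ ε δ : ℝ, ∃ M : ℕ, 0 < ε → 0 < δ → ∀ m : ℕ, M ≤ m →
      1 ≤ m ∧ 2 * m * Real.exp (1 - (ε / 5) ^ 2 / 4 * m) +
      (1 - (2 / 3) / (1 / (ε / 5) ^ 2 + 5)) ^ m ≤ δ := by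
    intro ε δ
    by_cases h : 0 < ε ∧ 0 < δ
    · obtain ⟨M, hM⟩ := exists_mc (ε / 5) δ (by linarith [h.1]) h.2
      exact ⟨M, fun _ _ => hM⟩
    · exact ⟨0, fun h1 h2 => absurd ⟨h1, h2⟩ h⟩
  choose mc hmc using hex
  refine ⟨A, mc, ?_⟩
  intro p hp η h0 h1 r p' hmix ε δ hε hε1 hδ hδ1 m hm
  obtain ⟨hm1, hmδ⟩ := hmc ε δ hε hδ m hm
  rw [probEvent_eq]
  by_cases hη : 1 / 3 ≤ η
  · have : ∀ S, S ∈ {S | tv (A S) p ≤ 3 * η + ε} := by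
      intro S
      show tv (A S) p ≤ 3 * η + ε
      have := tv_le_one (A S) p
      linarith
    simp only [this, if_true, ex_const]
    exact tsub_le_self
  push Not at hη
  obtain ⟨m, rfl⟩ : ∃ m', m = m' + 1 := ⟨m - 1, by omega⟩
  set e := ε / 5 with he
  have he0 : 0 < e := by positivity
  have he1 : e ≤ 1 := by linarith
  set c : ℝ := (2 / 3) / (1 / e ^ 2 + 5) with hc
  have hD : 0 < 1 / e ^ 2 + 5 := by positivity
  have hc0 : 0 < c := by positivity
  have hc1 : c ≤ 1 := by
    rw [hc, div_le_one hD]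
    have : 0 < 1 / e ^ 2 := by positivity
    linarith
  obtain ⟨Miss, hMiss1, hMiss2⟩ : ∃ Miss : Multiset (ℕ × ℕ) → Prop,
      (∀ S, ¬ Miss S → ∃ p0 ∈ cands B g S, tv p0 p ≤ e) ∧
      ex (iid p' (m + 1)) (fun S => if Miss S then 1 else 0)
        ≤ ENNReal.ofReal ((1 - c) ^ (m + 1)) := by
    obtain ⟨i, j, hj, hjg, hne, hpp⟩ := hp
    by_cases hje : 1 / (j : ℝ) ≤ e
    · refine ⟨fun _ => False, fun S _ => ⟨d0, d0_mem_cands B g S, (tv_d0 hj hpp).trans hje⟩, ?_⟩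
      simp [ex_const]
    · push Not at hje
      refine ⟨fun S => (i, 2 * j + 2) ∉ S, fun S hS => ⟨p, ?_, ?_⟩, ?_⟩
      · rw [not_not] at hS
        exact (mem_cands_iff B g S p).2 (Or.inr ⟨_, hS, cand_eq hj hjg hne hpp⟩)
      · rw [tv_self]; exact he0.le
      · have hq : ENNReal.ofReal c ≤ p' (i, 2 * j + 2) := by
          rw [hmix, pijk_lab hpp]
          refine le_trans ?_ (le_add_right le_rfl)
          have hj0 : (0 : ℝ) < j := by exact_mod_cast hj
          have hg0 : (0 : ℝ) < (g j : ℝ) := by simp only [hg]; positivity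
          have e1 : ((g j : ℕ) : ℝ≥0∞)⁻¹ = ENNReal.ofReal ((g j : ℝ)⁻¹) := by
            rw [ENNReal.ofReal_inv_of_pos hg0, ENNReal.ofReal_natCast]
          rw [e1, ← ENNReal.ofReal_mul (by linarith)]
          apply ENNReal.ofReal_le_ofReal
          have hgle : (g j : ℝ) ≤ 1 / e ^ 2 + 5 := by
            simp only [hg]
            push_cast
            have : (j : ℝ) ≤ 1 / e := by
              rw [lt_div_iff₀ hj0] at hje
              rw [le_div_iff₀ he0]; linarith
            have h2 : (j : ℝ) ^ 2 ≤ (1 / e) ^ 2 := by gcongr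
            rw [one_div_pow] at h2
            linarith
          rw [hc, div_eq_mul_inv]
          have : (2 / 3 : ℝ) ≤ 1 - η := by linarith
          gcongr
        refine le_trans (le_of_eq ?_) (miss_prob p' (i, 2 * j + 2) c hc0.le hc1 hq (m + 1))
        congr 1
        funext S
        by_cases h : (i, 2 * j + 2) ∈ S <;> simp [h]
  have hdev := uniform_dev p' (fun x => Wp (cand B g x)) e he0 he1 m
  rw [tsub_le_iff_right]
  have htot : (1 : ℝ≥0∞) ≤ ex (iid p' (m + 1)) (fun S => (if S ∈ {S | tv (A S) p ≤ 3 * η + ε} then 1 else 0)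
      + ((if ∃ x ∈ S, e * (m + 1) < |cnt (Wp (cand B g x)) S - pr p' (Wp (cand B g x)) * (m + 1)|
        then 1 else 0) + (if Miss S then 1 else 0))) := by
    refine le_trans (ex_const (iid p' (m + 1)) 1).ge (ex_mono _ fun S hS => ?_)
    by_cases hb : ∃ x ∈ S, e * (m + 1) < |cnt (Wp (cand B g x)) S - pr p' (Wp (cand B g x)) * (m + 1)|
    · rw [if_pos hb, add_comm 1, ← add_assoc]
      exact le_add_left le_rfl
    by_cases hM : Miss S
    · rw [if_pos hM, ← add_assoc]
      exact le_add_left le_rfl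
    obtain ⟨p0, hp0, htv⟩ := hMiss1 S hM
    have := learner_good hA p r p' η h0 h1 hmix e he0 m S (iid_card _ _ S hS) hb p0 hp0 htv
    have hin : S ∈ {S | tv (A S) p ≤ 3 * η + ε} := by
      show tv (A S) p ≤ 3 * η + ε
      linarith
    rw [if_pos hin]
    exact le_add_right le_rfl
  rw [ex_add, ex_add] at htot
  refine htot.trans ?_
  gcongr
  refine (add_le_add hdev hMiss2).trans ?_
  rw [← ENNReal.ofReal_add (by positivity) (pow_nonneg (by linarith) _)]
  apply ENNReal.ofReal_le_ofReal
  push_cast at hmδ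
  exact hmδ

/-- There is a class (namely `C_g` for a suitable superlinear `g`) that is
obliviously additively 3-robustly learnable, yet for every `α ≥ 1` is not adaptively
additively α-robustly learnable. -/
theorem stmt12 (B : ℕ → Finset ℕ) (hB : Function.Surjective B) :
    ∃ g : ℕ → ℕ, Superlinear g ∧
      ObliviouslyAdditivelyRobustlyLearnable (Cg B g) 3 ∧
      ∀ α : ℝ, 1 ≤ α → ¬ AdditivelyRobustlyLearnable (Cg B g) α := by

  refine ⟨fun j => j ^ 2 + 5, ?_, upper_bound B, fun α hα => lower_bound B hB α hα⟩
  refine Filter.tendsto_atTop_mono (fun n : ℕ => ?_) (tendsto_natCast_atTop_atTop (R := ℝ))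
  rcases Nat.eq_zero_or_pos n with rfl | hn
  · simp
  · have : (0 : ℝ) < n := by exact_mod_cast hn
    rw [le_div_iff₀ this]
    push_cast
    nlinarith
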